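/- Let ν ∈ (0,1), let u ∈ E be a unit vector with ⟨u, H u⟩ ≤ ν λ_min(H) < 0 and ⟨G, u⟩ ≤ 0, and let η^E := t* u where t* ≥ 0 is a global minimizer of t ↦ m(t u) over t ≥ 0. Then -m(η^E) ≥ (ν |λ_min(H)| / 6) · max{ ‖η^E‖², ν² |λ_min(H)|² / σ² }. (Inequality (3) of Lemma 3.1, the eigenpoint decrease bound.) -/

import Mathlib

/-!
Along a ray the model is a cubic polynomial. At a local minimizer `η` along its own ray the radial
derivative `⟪G, η⟫ + ⟪H η, η⟫ + σ ‖η‖³` vanishes, and eliminating the cubic term leaves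
`m η = (2 / 3) ⟪G, η⟫ + (1 / 6) ⟪H η, η⟫`, which yields the bound by `‖η‖²`. The bound by `κ² / σ²`,
where `-κ` bounds the curvature along the ray, is what the trial point of norm `κ / σ` achieves.
-/

open RealInnerProductSpace

section CubicModel

variable {E : Type*} [SeminormedAddCommGroup E] [InnerProductSpace ℝ E]
  {G : E} {H : E →ₗ[ℝ] E} {σ κ : ℝ} {η : E}

/-- The cubic-regularized second-order model with gradient `G`, Hessian `H` and regularization
parameter `σ`, whose decrease along rays is estimated below. The Hessian is only a linear map, since
the model depends on it through its quadratic form alone. -/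
noncomputable def cubicModel (G : E) (H : E →ₗ[ℝ] E) (σ : ℝ) (η : E) : ℝ :=
  ⟪G, η⟫ + (1 / 2) * ⟪H η, η⟫ + (σ / 3) * ‖η‖ ^ 3

theorem inner_map_smul_smul (H : E →ₗ[ℝ] E) (η : E) (s : ℝ) :
    ⟪H (s • η), s • η⟫ = s ^ 2 * ⟪H η, η⟫ := by
  rw [map_smul, real_inner_smul_left, real_inner_smul_right]
  ring

theorem cubicModel_smul_of_nonneg {s : ℝ} (hs : 0 ≤ s) :
    cubicModel G H σ (s • η) =
      ⟪G, η⟫ * s + (1 / 2) * ⟪H η, η⟫ * s ^ 2 + (σ / 3) * ‖η‖ ^ 3 * s ^ 3 := by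
  rw [cubicModel, inner_map_smul_smul, real_inner_smul_right, norm_smul_of_nonneg hs]
  ring

theorem hasDerivAt_cubicModel_smul_one :
    HasDerivAt (fun s : ℝ ↦ cubicModel G H σ (s • η)) (⟪G, η⟫ + ⟪H η, η⟫ + σ * ‖η‖ ^ 3) 1 := by
  have hpoly : HasDerivAt
      (fun s : ℝ ↦ ⟪G, η⟫ * s + (1 / 2) * ⟪H η, η⟫ * s ^ 2 + (σ / 3) * ‖η‖ ^ 3 * s ^ 3)
      (⟪G, η⟫ + ⟪H η, η⟫ + σ * ‖η‖ ^ 3) 1 := by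
    refine ((((hasDerivAt_id' (1 : ℝ)).const_mul ⟪G, η⟫).fun_add
      ((hasDerivAt_pow 2 (1 : ℝ)).const_mul ((1 / 2) * ⟪H η, η⟫))).fun_add
      ((hasDerivAt_pow 3 (1 : ℝ)).const_mul ((σ / 3) * ‖η‖ ^ 3))).congr_deriv ?_
    push_cast
    ring
  refine hpoly.congr_of_eventuallyEq ?_
  filter_upwards [Ici_mem_nhds one_pos] with s hs using cubicModel_smul_of_nonneg hs

theorem cubicModel_eq_of_isLocalMin
    (hmin : IsLocalMin (fun s : ℝ ↦ cubicModel G H σ (s • η)) 1) :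
    cubicModel G H σ η = (2 / 3) * ⟪G, η⟫ + (1 / 6) * ⟪H η, η⟫ := by
  have hstationary : ⟪G, η⟫ + ⟪H η, η⟫ + σ * ‖η‖ ^ 3 = 0 :=
    hmin.hasDerivAt_eq_zero hasDerivAt_cubicModel_smul_one
  rw [cubicModel]
  linear_combination (1 / 3) * hstationary

theorem cubicModel_le_of_isLocalMin
    (hmin : IsLocalMin (fun s : ℝ ↦ cubicModel G H σ (s • η)) 1)
    (hG : ⟪G, η⟫ ≤ 0) (hH : ⟪H η, η⟫ ≤ -κ * ‖η‖ ^ 2) :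
    cubicModel G H σ η ≤ -(κ / 6 * ‖η‖ ^ 2) := by
  rw [cubicModel_eq_of_isLocalMin hmin]
  linarith

theorem cubicModel_le_of_mul_norm_le
    (hη : σ * ‖η‖ ≤ κ) (hG : ⟪G, η⟫ ≤ 0) (hH : ⟪H η, η⟫ ≤ -κ * ‖η‖ ^ 2) :
    cubicModel G H σ η ≤ -(κ / 6 * ‖η‖ ^ 2) := by
  have hcubic : σ * ‖η‖ ^ 3 ≤ κ * ‖η‖ ^ 2 :=
    calc σ * ‖η‖ ^ 3 = σ * ‖η‖ * ‖η‖ ^ 2 := by ring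
      _ ≤ κ * ‖η‖ ^ 2 := by gcongr
  rw [cubicModel]
  linarith

theorem isLocalMin_cubicModel_smul_one {u : E} {t : ℝ} (ht : 0 ≤ t)
    (hmin : IsMinOn (fun s : ℝ ↦ cubicModel G H σ (s • u)) (Set.Ici 0) t) :
    IsLocalMin (fun s : ℝ ↦ cubicModel G H σ (s • t • u)) 1 := by
  filter_upwards [Ici_mem_nhds one_pos] with s hs
  simpa only [one_smul, smul_smul, one_mul] using isMinOn_iff.1 hmin (s * t) (mul_nonneg hs ht)

theorem eigen_point_decrease_general {u : E} {t : ℝ} (hσ : 0 < σ) (hκ : 0 ≤ κ) (hu : ‖u‖ = 1)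
    (hGu : ⟪G, u⟫ ≤ 0) (hHu : ⟪H u, u⟫ ≤ -κ) (ht : 0 ≤ t)
    (hmin : IsMinOn (fun s : ℝ ↦ cubicModel G H σ (s • u)) (Set.Ici 0) t) :
    κ / 6 * max (‖t • u‖ ^ 2) (κ ^ 2 / σ ^ 2) ≤ -cubicModel G H σ (t • u) := by
  have norm_ray {s : ℝ} (hs : 0 ≤ s) : ‖s • u‖ = s := by rw [norm_smul_of_nonneg hs, hu, mul_one]
  have descent_ray {s : ℝ} (hs : 0 ≤ s) : ⟪G, s • u⟫ ≤ 0 := by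
    rw [real_inner_smul_right]
    exact mul_nonpos_of_nonneg_of_nonpos hs hGu
  have curvature_ray {s : ℝ} (hs : 0 ≤ s) : ⟪H (s • u), s • u⟫ ≤ -κ * ‖s • u‖ ^ 2 := by
    rw [inner_map_smul_smul, norm_ray hs, mul_comm]
    gcongr
  have hminimizer : cubicModel G H σ (t • u) ≤ -(κ / 6 * ‖t • u‖ ^ 2) :=
    cubicModel_le_of_isLocalMin (isLocalMin_cubicModel_smul_one ht hmin)
      (descent_ray ht) (curvature_ray ht)
  have hr : 0 ≤ κ / σ := div_nonneg hκ hσ.le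
  have htrial : cubicModel G H σ (t • u) ≤ -(κ / 6 * (κ ^ 2 / σ ^ 2)) :=
    calc cubicModel G H σ (t • u) ≤ cubicModel G H σ ((κ / σ) • u) := isMinOn_iff.1 hmin _ hr
      _ ≤ -(κ / 6 * ‖(κ / σ) • u‖ ^ 2) := by
        refine cubicModel_le_of_mul_norm_le ?_ (descent_ray hr) (curvature_ray hr)
        rw [norm_ray hr, mul_div_cancel₀ _ hσ.ne']
      _ = -(κ / 6 * (κ ^ 2 / σ ^ 2)) := by rw [norm_ray hr, div_pow]
  rw [mul_max_of_nonneg _ _ (by positivity)]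
  exact max_le (le_neg_of_le_neg hminimizer) (le_neg_of_le_neg htrial)

end CubicModel

/-- Inequality (3) of Lemma 3.1: the eigenpoint decrease bound. -/
theorem eigen_point_decrease
    {E : Type*} [NormedAddCommGroup E] [InnerProductSpace ℝ E] [FiniteDimensional ℝ E]
    (G : E) (H : E →L[ℝ] E) (hH : IsSelfAdjoint H)
    (σ : ℝ) (hσ : 0 < σ)
    (m : E → ℝ)
    (hm : ∀ ξ : E, m ξ = ⟪G, ξ⟫ + (1 / 2) * ⟪H ξ, ξ⟫ + (σ / 3) * ‖ξ‖ ^ 3)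
    (lammin : ℝ)
    (hlam : lammin = sInf ((fun u : E => ⟪u, H u⟫) '' {u : E | ‖u‖ = 1}))
    (ν : ℝ) (hν : ν ∈ Set.Ioo (0 : ℝ) 1)
    (u : E) (hu : ‖u‖ = 1)
    (hcurv : ⟪u, H u⟫ ≤ ν * lammin) (hneg : ν * lammin < 0)
    (hGu : ⟪G, u⟫ ≤ 0)
    (tstar : ℝ) (ht : 0 ≤ tstar)
    (hmin : ∀ t : ℝ, 0 ≤ t → m (tstar • u) ≤ m (t • u))
    (ηE : E) (hηE : ηE = tstar • u) :
    -m ηE ≥ (ν * |lammin| / 6) * max (‖ηE‖ ^ 2) (ν ^ 2 * |lammin| ^ 2 / σ ^ 2) := by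
  obtain rfl : m = cubicModel G (H : E →ₗ[ℝ] E) σ := funext hm
  have hκ : ν * |lammin| = -(ν * lammin) := by rw [← abs_of_neg hneg, abs_mul, abs_of_pos hν.1]
  rw [hηE, ← mul_pow, hκ]
  exact eigen_point_decrease_general hσ (neg_pos.2 hneg).le hu hGu
    (by simpa [real_inner_comm] using hcurv) ht (isMinOn_iff.2 hmin)
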